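/- Under Assumptions 1–3, with Π = {π ∈ L²(μ; ℝ^m) : π(x) ∈ A for a.e. x} for a compact convex set A ⊆ ℝ^m and μ a finite measure, the dual optimal set Ω* nonempty, and well-defined ALaM iterates with ρᵏ eventually constant equal to ρ̄, every weak sequential cluster point π̄ of the policy sequence {πᵏ} lies in Π, is feasible (F(π̄) ≤ 0 a.e.), and is globally optimal for the constrained problem: for every π ∈ Π with F(π) ≤ 0 a.e., J(π) ≤ J(π̄). -/

import Mathlib

open MeasureTheory Filter
open scoped RealInnerProductSpace

/-!
The augmented penalty is a differentiable convex monotone function of the constraint value, with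
gradient `(λᵏ + ρᵏ F(πᵏ⁺¹))⁺ = λᵏ⁺¹` at `F(πᵏ⁺¹)`, so by convexity a minimizer `πᵏ⁺¹` of the
augmented Lagrangian also minimizes the ordinary Lagrangian `L(·, λᵏ⁺¹)`. Hence `F(πᵏ⁺¹)` is a
supergradient of the dual function at `λᵏ⁺¹`, the update is an implicit projected ascent step, and
the multipliers are Fejér monotone with respect to any dual optimum:
`‖λᵏ⁺¹ - λᵏ‖² ≤ ‖λ* - λᵏ‖² - ‖λ* - λᵏ⁺¹‖²`. Therefore `λᵏ⁺¹ - λᵏ → 0` while `λᵏ` stays bounded,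
which gives feasibility and complementary slackness in the limit; passing to the limit in the
minimality of `πᵏ⁺¹` for `L(·, λᵏ⁺¹)` gives optimality. Only lattice operations compatible with the
norm enter, so the constraint space may be any Hilbert lattice.
-/

section HilbertLattice

lemma posPart_sub_self {G : Type*} [AddCommGroup G] [Lattice G] [IsOrderedAddMonoid G] (a : G) :
    a⁺ - a = a⁻ := by
  rw [sub_eq_iff_eq_add', ← sub_eq_iff_eq_add, posPart_sub_negPart]

variable {H : Type*} [NormedAddCommGroup H] [Lattice H] [HasSolidNorm H] [IsOrderedAddMonoid H]

lemma norm_posPart_le_norm_of_le {a b : H} (h : a ≤ b) : ‖a⁺‖ ≤ ‖b‖ := by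
  refine norm_le_norm_of_abs_le_abs ?_
  rw [abs_of_nonneg (posPart_nonneg a)]
  exact (posPart_mono h).trans (sup_le (le_abs_self b) (abs_nonneg b))

variable [InnerProductSpace ℝ H]

lemma real_inner_nonneg_of_nonneg {a b : H} (ha : 0 ≤ a) (hb : 0 ≤ b) : 0 ≤ ⟪a, b⟫ := by
  have habs : |a - b| ≤ |a + b| := by
    rw [abs_of_nonneg (add_nonneg ha hb), abs_le', neg_sub]
    exact ⟨(sub_le_self a hb).trans (le_add_of_nonneg_right hb),
      (sub_le_self b ha).trans (le_add_of_nonneg_left ha)⟩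
  have hnorm : ‖a - b‖ ^ 2 ≤ ‖a + b‖ ^ 2 := by
    gcongr
    exact norm_le_norm_of_abs_le_abs habs
  rw [norm_sub_sq_real, norm_add_sq_real] at hnorm
  linarith

lemma real_inner_posPart_negPart (a : H) : ⟪a⁺, a⁻⟫ = 0 := by
  have hnorm : ‖a⁺ + a⁻‖ ^ 2 = ‖a⁺ - a⁻‖ ^ 2 := by
    rw [posPart_add_negPart, posPart_sub_negPart, norm_abs_eq_norm]
  rw [norm_add_sq_real, norm_sub_sq_real] at hnorm
  linarith

lemma nonneg_of_forall_real_inner_nonneg {a : H} (h : ∀ b, 0 ≤ b → 0 ≤ ⟪a, b⟫) : 0 ≤ a := by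
  have hneg : 0 ≤ -‖a⁻‖ ^ 2 := by
    calc 0 ≤ ⟪a⁺ - a⁻, a⁻⟫ := by simpa only [posPart_sub_negPart] using h a⁻ (negPart_nonneg a)
      _ = -‖a⁻‖ ^ 2 := by
        rw [inner_sub_left, real_inner_posPart_negPart, real_inner_self_eq_norm_sq, zero_sub]
  have hzero : a⁻ = 0 := by simpa using le_antisymm (neg_nonneg.1 hneg) (sq_nonneg _)
  exact negPart_eq_zero.1 hzero

lemma posSMulMono_of_hasSolidNorm : PosSMulMono ℝ H :=
  .of_smul_nonneg fun c hc a ha ↦ nonneg_of_forall_real_inner_nonneg fun b hb ↦ by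
    rw [real_inner_smul_left]
    exact mul_nonneg hc (real_inner_nonneg_of_nonneg ha hb)

lemma real_inner_sub_posPart_nonneg {c : H} (hc : 0 ≤ c) (w : H) :
    0 ≤ ⟪c - w⁺, w⁺ - w⟫ := by
  rw [posPart_sub_self, inner_sub_left, real_inner_posPart_negPart, sub_zero]
  exact real_inner_nonneg_of_nonneg hc (negPart_nonneg w)

lemma norm_posPart_add_smul_sq_le {l f g v : H} {r : ℝ} (hr : 0 ≤ r) (h : g ≤ f + v) :
    ‖(l + r • g)⁺‖ ^ 2 ≤
      ‖(l + r • f)⁺‖ ^ 2 + 2 * (r * ⟪(l + r • f)⁺, v⟫) + r ^ 2 * ‖v‖ ^ 2 := by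
  have := posSMulMono_of_hasSolidNorm (H := H)
  have hle : l + r • g ≤ (l + r • f)⁺ + r • v :=
    calc l + r • g ≤ l + r • (f + v) := by gcongr
      _ = (l + r • f) + r • v := by module
      _ ≤ (l + r • f)⁺ + r • v := by gcongr; exact le_posPart _
  calc ‖(l + r • g)⁺‖ ^ 2 ≤ ‖(l + r • f)⁺ + r • v‖ ^ 2 := by
        gcongr
        exact norm_posPart_le_norm_of_le hle
    _ = _ := by
        rw [norm_add_sq_real, real_inner_smul_right, norm_smul, mul_pow, Real.norm_eq_abs, sq_abs]

end HilbertLattice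

section Real

lemma nonneg_of_forall_nonneg_add_mul {a b : ℝ} (h : ∀ t ∈ Set.Ioc (0 : ℝ) 1, 0 ≤ a + t * b) :
    0 ≤ a := by
  have hlim : Tendsto (fun t : ℝ ↦ a + t * b) (nhdsWithin 0 (Set.Ioi 0)) (nhds a) := by
    have : Continuous fun t : ℝ ↦ a + t * b := by fun_prop
    simpa using (this.tendsto 0).mono_left nhdsWithin_le_nhds
  exact ge_of_tendsto hlim (eventually_of_mem (Ioc_mem_nhdsGT one_pos) h)

lemma tendsto_zero_of_le_sub_succ {a b : ℕ → ℝ} (ha : ∀ k, 0 ≤ a k) (hb : ∀ k, 0 ≤ b k)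
    (h : ∀ k, b k ≤ a k - a (k + 1)) : Tendsto b atTop (nhds 0) := by
  have hanti : Antitone a := antitone_nat_of_succ_le fun k ↦ by linarith [hb k, h k]
  have hconv := tendsto_atTop_ciInf hanti ⟨0, Set.forall_mem_range.2 ha⟩
  exact squeeze_zero hb h (by simpa using hconv.sub ((tendsto_add_atTop_iff_nat 1).2 hconv))

lemma coe_sInf_image_eq_biInf {ι : Type*} {s : Set ι} (hs : s.Nonempty) {f : ι → ℝ}
    (hf : BddBelow (f '' s)) : ((sInf (f '' s) : ℝ) : EReal) = ⨅ i ∈ s, (f i : EReal) := by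
  rw [Monotone.map_csInf_of_continuousAt continuous_coe_real_ereal.continuousAt
    EReal.coe_strictMono.monotone (hs.image f) hf, sInf_image, iInf_image]

lemma exists_tendsto_atTop_comp_add_eq_succ {φ : ℕ → ℕ} (hφ : Tendsto φ atTop atTop) :
    ∃ (N : ℕ) (ψ : ℕ → ℕ), Tendsto ψ atTop atTop ∧ ∀ j, φ (j + N) = ψ j + 1 := by
  obtain ⟨N, hN⟩ := eventually_atTop.1 (hφ.eventually_ge_atTop 1)
  refine ⟨N, fun j ↦ φ (j + N) - 1,
    (tendsto_sub_atTop_nat 1).comp (hφ.comp (tendsto_add_atTop_nat N)), fun j ↦ ?_⟩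
  exact (Nat.sub_add_cancel (hN _ (Nat.le_add_left N j))).symm

lemma concaveOn_of_le_one_sub {V : Type*} [AddCommGroup V] [Module ℝ V] {S : Set V}
    (hS : Convex ℝ S) {f : V → ℝ}
    (h : ∀ u ∈ S, ∀ v ∈ S, ∀ t : ℝ, 0 ≤ t → t ≤ 1 →
      t * f u + (1 - t) * f v ≤ f (t • u + (1 - t) • v)) :
    ConcaveOn ℝ S f := by
  refine ⟨hS, fun u hu v hv a b ha hb hab ↦ ?_⟩
  obtain rfl : b = 1 - a := by linarith
  exact h u hu v hv a ha (by linarith)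

end Real

section Weak

lemma mem_of_tendsto_toWeakSpace {ι V : Type*} [AddCommGroup V] [Module ℝ V] [TopologicalSpace V]
    [IsTopologicalAddGroup V] [ContinuousSMul ℝ V] [LocallyConvexSpace ℝ V] {S : Set V}
    (hconv : Convex ℝ S) (hclosed : IsClosed S) {l : Filter ι} [l.NeBot] {u : ι → V} {p : V}
    (hu : ∀ i, u i ∈ S)
    (h : Tendsto (fun i ↦ toWeakSpace ℝ V (u i)) l (nhds (toWeakSpace ℝ V p))) : p ∈ S := by
  have hmem : toWeakSpace ℝ V p ∈ closure (toWeakSpace ℝ V '' S) :=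
    mem_closure_of_tendsto h (Eventually.of_forall fun i ↦ Set.mem_image_of_mem _ (hu i))
  rwa [← hconv.toWeakSpace_closure ℝ, hclosed.closure_eq,
    (toWeakSpace ℝ V).injective.mem_set_image] at hmem

lemma tendsto_toWeakSpace_iff_real_inner {ι V : Type*} [NormedAddCommGroup V]
    [InnerProductSpace ℝ V] [CompleteSpace V] {l : Filter ι} {u : ι → V} {p : V} :
    Tendsto (fun i ↦ toWeakSpace ℝ V (u i)) l (nhds (toWeakSpace ℝ V p)) ↔
      ∀ z, Tendsto (fun i ↦ ⟪u i, z⟫) l (nhds ⟪p, z⟫) := by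
  have hinj : Function.Injective (topDualPairing ℝ V).flip := fun x y hxy ↦
    (SeparatingDual.eq_iff_forall_dual_eq (R := ℝ)).2 (DFunLike.congr_fun hxy)
  refine (WeakBilin.tendsto_iff_forall_eval_tendsto _ hinj).trans ?_
  refine (InnerProductSpace.toDual ℝ V).surjective.forall.trans (forall_congr' fun z ↦ ?_)
  simp only [real_inner_comm z]
  rfl

end Weak

section Lp

variable {α E : Type*} [MeasurableSpace α] {μ : Measure α} {p : ENNReal} [NormedAddCommGroup E]

lemma isClosed_setOf_ae_mem_Lp [Fact (1 ≤ p)] {A : Set E} (hA : IsClosed A) :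
    IsClosed {f : Lp E p μ | ∀ᵐ x ∂μ, f x ∈ A} := by
  refine IsSeqClosed.isClosed fun u f hu hf ↦ ?_
  obtain ⟨ns, -, hns⟩ := (tendstoInMeasure_of_tendsto_Lp hf).exists_seq_tendsto_ae
  filter_upwards [hns, ae_all_iff.2 hu] with x hlim hmem
  exact hA.mem_of_tendsto hlim (Eventually.of_forall fun n ↦ hmem (ns n))

lemma convex_setOf_ae_mem_Lp [NormedSpace ℝ E] {A : Set E} (hA : Convex ℝ A) :
    Convex ℝ {f : Lp E p μ | ∀ᵐ x ∂μ, f x ∈ A} := by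
  intro f hf g hg a b ha hb hab
  filter_upwards [hf, hg, Lp.coeFn_add (a • f) (b • g), Lp.coeFn_smul a f, Lp.coeFn_smul b g]
    with x hfx hgx hadd hsmulf hsmulg
  rw [hadd, Pi.add_apply, hsmulf, hsmulg]
  exact hA hfx hgx ha hb hab

lemma Lp_posPart_eq_posPart (f : Lp ℝ p μ) : Lp.posPart f = f⁺ := by
  ext1
  filter_upwards [Lp.coeFn_posPart f, Lp.coeFn_sup f 0, Lp.coeFn_zero ℝ p μ] with x h1 h2 h3
  rw [h1, posPart_def, h2, Pi.sup_apply, h3, Pi.zero_apply]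

lemma Lp_nonpos_iff_ae {f : Lp ℝ p μ} : f ≤ 0 ↔ ∀ᵐ x ∂μ, f x ≤ 0 := by
  rw [← Lp.coeFn_le]
  exact eventually_congr ((Lp.coeFn_zero ℝ p μ).mono fun x hx ↦ by rw [hx, Pi.zero_apply])

lemma convexOn_of_ae_le {V : Type*} [AddCommGroup V] [Module ℝ V] {S : Set V} (hS : Convex ℝ S)
    {f : V → Lp ℝ p μ}
    (h : ∀ u ∈ S, ∀ v ∈ S, ∀ t : ℝ, 0 ≤ t → t ≤ 1 →
      ∀ᵐ x ∂μ, f (t • u + (1 - t) • v) x ≤ t * f u x + (1 - t) * f v x) :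
    ConvexOn ℝ S f := by
  refine ⟨hS, fun u hu v hv a b ha hb hab ↦ ?_⟩
  obtain rfl : b = 1 - a := by linarith
  rw [← Lp.coeFn_le]
  filter_upwards [h u hu v hv a ha (by linarith), Lp.coeFn_add (a • f u) ((1 - a) • f v),
    Lp.coeFn_smul a (f u), Lp.coeFn_smul (1 - a) (f v)] with x hx hadd hsmulu hsmulv
  rw [hadd, Pi.add_apply, hsmulu, hsmulv]
  exact hx

end Lp

section Lagrangian

variable {V H : Type*} [NormedAddCommGroup H] [InnerProductSpace ℝ H]

/-- The Lagrangian `L(p, l)` of the problem of maximizing `J` subject to `F ≤ 0`. -/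
def lagrangian (J : V → ℝ) (F : V → H) (p : V) (l : H) : ℝ :=
  -J p + ⟪l, F p⟫

/-- The dual function `d(l) = inf_{p ∈ S} L(p, l)`, with values in the extended reals so that it is
meaningful when the Lagrangian is unbounded below. -/
noncomputable def dualFunction (J : V → ℝ) (F : V → H) (S : Set V) (l : H) : EReal :=
  ⨅ p ∈ S, (lagrangian J F p l : EReal)

/-- The augmented Lagrangian `L(p, l, r)` with penalty parameter `r`. -/
noncomputable def augmentedLagrangian [Lattice H] (J : V → ℝ) (F : V → H) (p : V) (l : H)
    (r : ℝ) : ℝ :=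
  -J p + 1 / (2 * r) * ‖(l + r • F p)⁺‖ ^ 2 - 1 / (2 * r) * ‖l‖ ^ 2

/-- The multiplier `l` maximizes the dual function over the positive cone. -/
def IsDualOptimal [PartialOrder H] (J : V → ℝ) (F : V → H) (S : Set V) (l : H) : Prop :=
  0 ≤ l ∧ IsMaxOn (dualFunction J F S) (Set.Ici 0) l

variable {J : V → ℝ} {F : V → H} {S : Set V}

lemma real_inner_sub_nonneg_of_dualFunction_le {p : V} (hp : p ∈ S) {l l' : H}
    (hmin : IsMinOn (lagrangian J F · l) S p) (hle : dualFunction J F S l ≤ dualFunction J F S l') :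
    0 ≤ ⟪l' - l, F p⟫ := by
  have hcoe : (lagrangian J F p l : EReal) ≤ lagrangian J F p l' :=
    calc (lagrangian J F p l : EReal) ≤ dualFunction J F S l :=
          le_iInf₂ fun q hq ↦ EReal.coe_le_coe_iff.2 (hmin hq)
      _ ≤ dualFunction J F S l' := hle
      _ ≤ lagrangian J F p l' := biInf_le _ hp
  have hreal : -J p + ⟪l, F p⟫ ≤ -J p + ⟪l', F p⟫ := EReal.coe_le_coe_iff.1 hcoe
  rw [inner_sub_left]
  linarith

lemma dualFunction_eq_coe_sInf (hS : S.Nonempty) {MJ MF : ℝ} (hJ : ∀ p ∈ S, |J p| ≤ MJ)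
    (hF : ∀ p ∈ S, ‖F p‖ ≤ MF) (l : H) :
    dualFunction J F S l = (sInf ((fun p ↦ -J p + ⟪l, F p⟫) '' S) : ℝ) := by
  refine (coe_sInf_image_eq_biInf hS ⟨-MJ - ‖l‖ * MF, Set.forall_mem_image.2 fun p hp ↦ ?_⟩).symm
  have hinner : -(‖l‖ * MF) ≤ ⟪l, F p⟫ :=
    (abs_le.1 ((abs_real_inner_le_norm l (F p)).trans (by gcongr; exact hF p hp))).1
  have hobj : J p ≤ MJ := (abs_le.1 (hJ p hp)).2
  unfold lagrangian
  linarith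

lemma isDualOptimal_iff_sInf_le [PartialOrder H] (hS : S.Nonempty) {MJ MF : ℝ}
    (hJ : ∀ p ∈ S, |J p| ≤ MJ) (hF : ∀ p ∈ S, ‖F p‖ ≤ MF) {l : H} :
    IsDualOptimal J F S l ↔ 0 ≤ l ∧ ∀ l' : H, 0 ≤ l' →
      sInf ((fun p ↦ -J p + ⟪l', F p⟫) '' S) ≤ sInf ((fun p ↦ -J p + ⟪l, F p⟫) '' S) := by
  simp only [IsDualOptimal, isMaxOn_iff, Set.mem_Ici, dualFunction_eq_coe_sInf hS hJ hF,
    EReal.coe_le_coe_iff]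

variable [Lattice H] [HasSolidNorm H] [IsOrderedAddMonoid H]

lemma augmentedLagrangian_le_of_le_add {p q : V} {l v : H} {r : ℝ} (hr : 0 < r)
    (hF : F q ≤ F p + v) :
    augmentedLagrangian J F q l r ≤
      augmentedLagrangian J F p l r + (J p - J q + ⟪(l + r • F p)⁺, v⟫ + r / 2 * ‖v‖ ^ 2) := by
  have hpen := mul_le_mul_of_nonneg_left (norm_posPart_add_smul_sq_le (l := l) hr.le hF)
    (by positivity : 0 ≤ 1 / (2 * r))
  have hexpand : 1 / (2 * r) * (‖(l + r • F p)⁺‖ ^ 2 + 2 * (r * ⟪(l + r • F p)⁺, v⟫)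
      + r ^ 2 * ‖v‖ ^ 2) =
      1 / (2 * r) * ‖(l + r • F p)⁺‖ ^ 2 + ⟪(l + r • F p)⁺, v⟫ + r / 2 * ‖v‖ ^ 2 := by
    field_simp
  unfold augmentedLagrangian
  linarith

variable [AddCommGroup V] [Module ℝ V]

lemma isMinOn_lagrangian_of_isMinOn_augmentedLagrangian (hJ : ConcaveOn ℝ S J) (hF : ConvexOn ℝ S F)
    {p : V} (hp : p ∈ S) {l : H} {r : ℝ} (hr : 0 < r)
    (hmin : IsMinOn (augmentedLagrangian J F · l r) S p) :
    IsMinOn (lagrangian J F · (l + r • F p)⁺) S p := by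
  intro q hq
  set m := (l + r • F p)⁺ with hm
  have hdir : ∀ t ∈ Set.Ioc (0 : ℝ) 1,
      0 ≤ (lagrangian J F q m - lagrangian J F p m) + t * (r / 2 * ‖F q - F p‖ ^ 2) := by
    rintro t ⟨ht0, ht1⟩
    have hmem : t • q + (1 - t) • p ∈ S := hJ.1 hq hp ht0.le (by linarith) (by ring)
    have hJt : t * J q + (1 - t) * J p ≤ J (t • q + (1 - t) • p) :=
      hJ.2 hq hp ht0.le (by linarith) (by ring)
    have hFt : F (t • q + (1 - t) • p) ≤ F p + t • (F q - F p) :=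
      (hF.2 hq hp ht0.le (by linarith) (by ring)).trans_eq (by module)
    have hstep : augmentedLagrangian J F p l r ≤ augmentedLagrangian J F p l r + _ :=
      (hmin hmem).trans (augmentedLagrangian_le_of_le_add hr hFt)
    rw [real_inner_smul_right, inner_sub_right, norm_smul, mul_pow, Real.norm_eq_abs, sq_abs,
      ← hm] at hstep
    refine nonneg_of_mul_nonneg_right (a := t) ?_ ht0
    unfold lagrangian
    linarith
  exact sub_nonneg.1 (nonneg_of_forall_nonneg_add_mul hdir)

end Lagrangian

/-- The sequences `π` and `lam` are iterates of the augmented Lagrangian method for maximizing `J`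
over `S` subject to `F ≤ 0`, with penalty parameters `ρ` bounded away from zero. As in the paper,
`π 0` is not an iterate. -/
structure IsALaMIteration {V H : Type*} [NormedAddCommGroup H] [InnerProductSpace ℝ H] [Lattice H]
    (J : V → ℝ) (F : V → H) (S : Set V) (ρ : ℕ → ℝ) (lam : ℕ → H) (π : ℕ → V) : Prop where
  exists_penalty_ge : ∃ ρ₀ > 0, ∀ k, ρ₀ ≤ ρ k
  mem : ∀ k, π (k + 1) ∈ S
  isMinOn : ∀ k, IsMinOn (augmentedLagrangian J F · (lam k) (ρ k)) S (π (k + 1))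
  multiplier_succ : ∀ k, lam (k + 1) = (lam k + ρ k • F (π (k + 1)))⁺

/-- The scaled multiplier increment, which bounds the constraint violation of the iterate `k + 1`
and carries its complementary slackness defect. -/
noncomputable def multiplierResidual {H : Type*} [AddCommGroup H] [Module ℝ H] (ρ : ℕ → ℝ)
    (lam : ℕ → H) (k : ℕ) : H :=
  (ρ k)⁻¹ • (lam (k + 1) - lam k)

namespace IsALaMIteration

variable {V H : Type*} [NormedAddCommGroup H] [InnerProductSpace ℝ H] [Lattice H]
  {J : V → ℝ} {F : V → H} {S : Set V} {ρ : ℕ → ℝ} {lam : ℕ → H} {π : ℕ → V}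

lemma penalty_pos (h : IsALaMIteration J F S ρ lam π) (k : ℕ) : 0 < ρ k :=
  let ⟨_, hpos, hle⟩ := h.exists_penalty_ge
  hpos.trans_le (hle k)

lemma multiplier_succ_nonneg (h : IsALaMIteration J F S ρ lam π) (k : ℕ) : 0 ≤ lam (k + 1) :=
  h.multiplier_succ k ▸ posPart_nonneg _

variable [HasSolidNorm H] [IsOrderedAddMonoid H]

lemma constraint_le_multiplierResidual (h : IsALaMIteration J F S ρ lam π) (k : ℕ) :
    F (π (k + 1)) ≤ multiplierResidual ρ lam k := by
  have := posSMulMono_of_hasSolidNorm (H := H)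
  have hle : ρ k • F (π (k + 1)) ≤ lam (k + 1) - lam k := by
    rw [le_sub_iff_add_le', h.multiplier_succ]
    exact le_posPart _
  calc F (π (k + 1)) = (ρ k)⁻¹ • ρ k • F (π (k + 1)) :=
      (inv_smul_smul₀ (h.penalty_pos k).ne' _).symm
    _ ≤ multiplierResidual ρ lam k :=
      smul_le_smul_of_nonneg_left hle (inv_nonneg.2 (h.penalty_pos k).le)

lemma real_inner_constraint_eq (h : IsALaMIteration J F S ρ lam π) (k : ℕ) :
    ⟪lam (k + 1), F (π (k + 1))⟫ = ⟪lam (k + 1), multiplierResidual ρ lam k⟫ := by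
  have hcompl := real_inner_posPart_negPart (lam k + ρ k • F (π (k + 1)))
  rw [← posPart_sub_self, ← h.multiplier_succ, ← sub_sub, inner_sub_right,
    sub_eq_zero, real_inner_smul_right] at hcompl
  rw [multiplierResidual, real_inner_smul_right, hcompl, inv_mul_cancel_left₀ (h.penalty_pos k).ne']

section DualOptimal

variable [AddCommGroup V] [Module ℝ V] {ls : H}

lemma isMinOn_lagrangian (h : IsALaMIteration J F S ρ lam π) (hJ : ConcaveOn ℝ S J)
    (hF : ConvexOn ℝ S F) (k : ℕ) : IsMinOn (lagrangian J F · (lam (k + 1))) S (π (k + 1)) :=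
  h.multiplier_succ k ▸
    isMinOn_lagrangian_of_isMinOn_augmentedLagrangian hJ hF (h.mem k) (h.penalty_pos k)
      (h.isMinOn k)

lemma norm_multiplier_sub_sq_le (h : IsALaMIteration J F S ρ lam π) (hJ : ConcaveOn ℝ S J)
    (hF : ConvexOn ℝ S F) (hls : IsDualOptimal J F S ls) (k : ℕ) :
    ‖lam (k + 1) - lam k‖ ^ 2 ≤ ‖ls - lam k‖ ^ 2 - ‖ls - lam (k + 1)‖ ^ 2 := by
  have hdual : 0 ≤ ⟪ls - lam (k + 1), F (π (k + 1))⟫ :=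
    real_inner_sub_nonneg_of_dualFunction_le (h.mem k) (h.isMinOn_lagrangian hJ hF k)
      (hls.2 (h.multiplier_succ_nonneg k))
  have hproj := real_inner_sub_posPart_nonneg hls.1 (lam k + ρ k • F (π (k + 1)))
  rw [← h.multiplier_succ] at hproj
  have hstep : 0 ≤ ⟪ls - lam (k + 1), lam (k + 1) - lam k⟫ :=
    calc 0 ≤ ⟪ls - lam (k + 1), lam (k + 1) - (lam k + ρ k • F (π (k + 1)))⟫
          + ρ k * ⟪ls - lam (k + 1), F (π (k + 1))⟫ :=
          add_nonneg hproj (mul_nonneg (h.penalty_pos k).le hdual)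
      _ = ⟪ls - lam (k + 1), lam (k + 1) - lam k⟫ := by
        rw [← real_inner_smul_right, ← inner_add_right]
        congr 1
        abel
  rw [← sub_add_sub_cancel ls (lam (k + 1)) (lam k), norm_add_sq_real]
  linarith

lemma tendsto_multiplierResidual (h : IsALaMIteration J F S ρ lam π) (hJ : ConcaveOn ℝ S J)
    (hF : ConvexOn ℝ S F) (hls : IsDualOptimal J F S ls) :
    Tendsto (multiplierResidual ρ lam) atTop (nhds 0) := by
  have hsq : Tendsto (fun k ↦ ‖lam (k + 1) - lam k‖ ^ 2) atTop (nhds 0) :=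
    tendsto_zero_of_le_sub_succ (a := fun k ↦ ‖ls - lam k‖ ^ 2) (fun _ ↦ sq_nonneg _)
      (fun _ ↦ sq_nonneg _) (h.norm_multiplier_sub_sq_le hJ hF hls)
  have hdiff : Tendsto (fun k ↦ ‖lam (k + 1) - lam k‖) atTop (nhds 0) := by
    simpa [Real.sqrt_sq (norm_nonneg _)] using hsq.sqrt
  obtain ⟨ρ₀, hpos, hρ⟩ := h.exists_penalty_ge
  refine squeeze_zero_norm (a := fun k ↦ ρ₀⁻¹ * ‖lam (k + 1) - lam k‖) (fun k ↦ ?_)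
    (by simpa using hdiff.const_mul ρ₀⁻¹)
  rw [multiplierResidual, norm_smul, Real.norm_of_nonneg (inv_nonneg.2 (h.penalty_pos k).le)]
  gcongr
  exact hρ k

lemma norm_multiplier_le (h : IsALaMIteration J F S ρ lam π) (hJ : ConcaveOn ℝ S J)
    (hF : ConvexOn ℝ S F) (hls : IsDualOptimal J F S ls) (k : ℕ) :
    ‖lam k‖ ≤ ‖ls‖ + ‖ls - lam 0‖ := by
  have hanti : Antitone fun k ↦ ‖ls - lam k‖ ^ 2 := antitone_nat_of_succ_le fun k ↦ by
    linarith [h.norm_multiplier_sub_sq_le hJ hF hls k, sq_nonneg ‖lam (k + 1) - lam k‖]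
  calc ‖lam k‖ ≤ ‖ls‖ + ‖ls - lam k‖ := by simpa using norm_sub_le ls (ls - lam k)
    _ ≤ ‖ls‖ + ‖ls - lam 0‖ := by
      gcongr
      exact (sq_le_sq₀ (norm_nonneg _) (norm_nonneg _)).1 (hanti k.zero_le)

lemma tendsto_real_inner_constraint (h : IsALaMIteration J F S ρ lam π) (hJ : ConcaveOn ℝ S J)
    (hF : ConvexOn ℝ S F) (hls : IsDualOptimal J F S ls) :
    Tendsto (fun k ↦ ⟪lam (k + 1), F (π (k + 1))⟫) atTop (nhds 0) := by
  refine squeeze_zero_norm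
    (a := fun k ↦ (‖ls‖ + ‖ls - lam 0‖) * ‖multiplierResidual ρ lam k‖) (fun k ↦ ?_)
    (by simpa using (h.tendsto_multiplierResidual hJ hF hls).norm.const_mul (‖ls‖ + ‖ls - lam 0‖))
  rw [h.real_inner_constraint_eq]
  refine (norm_inner_le_norm _ _).trans ?_
  gcongr
  exact h.norm_multiplier_le hJ hF hls _

lemma constraint_limit_nonpos (h : IsALaMIteration J F S ρ lam π) (hJ : ConcaveOn ℝ S J)
    (hF : ConvexOn ℝ S F) (hls : IsDualOptimal J F S ls) {ι : Type*} {l : Filter ι} [l.NeBot]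
    {ψ : ι → ℕ} (hψ : Tendsto ψ l atTop) {f : H}
    (hf : Tendsto (fun i ↦ F (π (ψ i + 1))) l (nhds f)) : f ≤ 0 :=
  le_of_tendsto_of_tendsto' hf ((h.tendsto_multiplierResidual hJ hF hls).comp hψ)
    fun i ↦ h.constraint_le_multiplierResidual (ψ i)

lemma le_objective_limit (h : IsALaMIteration J F S ρ lam π) (hJ : ConcaveOn ℝ S J)
    (hF : ConvexOn ℝ S F) (hls : IsDualOptimal J F S ls) {ι : Type*} {l : Filter ι} [l.NeBot]
    {ψ : ι → ℕ} (hψ : Tendsto ψ l atTop) {c : ℝ}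
    (hc : Tendsto (fun i ↦ J (π (ψ i + 1))) l (nhds c)) {q : V} (hq : q ∈ S) (hFq : F q ≤ 0) :
    J q ≤ c := by
  have hlim := hc.sub ((h.tendsto_real_inner_constraint hJ hF hls).comp hψ)
  rw [sub_zero] at hlim
  refine ge_of_tendsto' hlim fun i ↦ ?_
  have hmin : -J (π (ψ i + 1)) + ⟪lam (ψ i + 1), F (π (ψ i + 1))⟫ ≤ -J q + ⟪lam (ψ i + 1), F q⟫ :=
    h.isMinOn_lagrangian hJ hF (ψ i) hq
  have hslack : 0 ≤ ⟪lam (ψ i + 1), -F q⟫ :=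
    real_inner_nonneg_of_nonneg (h.multiplier_succ_nonneg (ψ i)) (neg_nonneg.2 hFq)
  rw [inner_neg_right] at hslack
  simp only [Function.comp_apply]
  linarith

end DualOptimal

end IsALaMIteration

/-- `f` sends weakly convergent sequences of `S` whose limit lies in `S` to convergent sequences:
the strong continuity of Assumption 2. -/
def WeaklySeqContinuousOn {V Y : Type*} [AddCommGroup V] [Module ℝ V] [TopologicalSpace V]
    [TopologicalSpace Y] (f : V → Y) (S : Set V) : Prop :=
  ∀ (u : ℕ → V) (p : V), (∀ n, u n ∈ S) → p ∈ S →
    Tendsto (fun n ↦ toWeakSpace ℝ V (u n)) atTop (nhds (toWeakSpace ℝ V p)) →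
      Tendsto (fun n ↦ f (u n)) atTop (nhds (f p))

theorem stmt_1_general {V H : Type*} [AddCommGroup V] [Module ℝ V] [TopologicalSpace V]
    [IsTopologicalAddGroup V] [ContinuousSMul ℝ V] [LocallyConvexSpace ℝ V]
    [NormedAddCommGroup H] [InnerProductSpace ℝ H] [Lattice H] [HasSolidNorm H]
    [IsOrderedAddMonoid H] {J : V → ℝ} {F : V → H} {S : Set V} (hS : IsClosed S)
    (hJ : ConcaveOn ℝ S J) (hF : ConvexOn ℝ S F)
    (hJcont : WeaklySeqContinuousOn J S) (hFcont : WeaklySeqContinuousOn F S)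
    {ls : H} (hls : IsDualOptimal J F S ls) {ρ : ℕ → ℝ} {lam : ℕ → H} {π : ℕ → V}
    (h : IsALaMIteration J F S ρ lam π) {p : V} {φ : ℕ → ℕ} (hφ : Tendsto φ atTop atTop)
    (hp : Tendsto (fun j ↦ toWeakSpace ℝ V (π (φ j))) atTop (nhds (toWeakSpace ℝ V p))) :
    p ∈ S ∧ F p ≤ 0 ∧ ∀ q ∈ S, F q ≤ 0 → J q ≤ J p := by
  obtain ⟨N, ψ, hψ, hφψ⟩ := exists_tendsto_atTop_comp_add_eq_succ hφ
  have hpψ : Tendsto (fun j ↦ toWeakSpace ℝ V (π (ψ j + 1))) atTop (nhds (toWeakSpace ℝ V p)) := by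
    simpa only [hφψ] using (tendsto_add_atTop_iff_nat N).2 hp
  have hmem : ∀ j, π (ψ j + 1) ∈ S := fun j ↦ h.mem (ψ j)
  have hpS : p ∈ S := mem_of_tendsto_toWeakSpace hJ.1 hS hmem hpψ
  exact ⟨hpS, h.constraint_limit_nonpos hJ hF hls hψ (hFcont _ _ hmem hpS hpψ),
    fun q ↦ h.le_objective_limit hJ hF hls hψ (hJcont _ _ hmem hpS hpψ)⟩

/-- under Assumptions 1–3, with policy space
`Π = {π ∈ L²(μ; ℝ^m) : π(x) ∈ A a.e.}` for a compact convex `A ⊆ ℝ^m` and finite measure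
`μ`, a nonempty dual optimal set, and well-defined ALaM iterates with penalty parameters
eventually constant equal to `ρ̄`, every weak sequential cluster point `π̄` of the policy
sequence `{πᵏ}` lies in `Π`, is feasible (`F(π̄) ≤ 0` a.e.), and is globally optimal for
the constrained problem. -/
theorem stmt_1 {α : Type*} [MeasurableSpace α] {μ : Measure α} [IsFiniteMeasure μ] {m : ℕ}
    (A : Set (EuclideanSpace ℝ (Fin m))) (hAcompact : IsCompact A) (hAconv : Convex ℝ A)
    (J : Lp (EuclideanSpace ℝ (Fin m)) 2 μ → ℝ)
    (F : Lp (EuclideanSpace ℝ (Fin m)) 2 μ → Lp ℝ 2 μ)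
    (Pi : Set (Lp (EuclideanSpace ℝ (Fin m)) 2 μ))
    (hPi : Pi = {π : Lp (EuclideanSpace ℝ (Fin m)) 2 μ | ∀ᵐ x ∂μ, π x ∈ A})
    -- Assumption 1 (boundedness)
    (MJ MF : ℝ) (hMJ : ∀ π ∈ Pi, |J π| ≤ MJ) (hMF : ∀ π ∈ Pi, ‖F π‖ ≤ MF)
    -- Assumption 2 (strong continuity along weakly convergent sequences)
    (hcont : ∀ (πs : ℕ → Lp (EuclideanSpace ℝ (Fin m)) 2 μ)
      (π : Lp (EuclideanSpace ℝ (Fin m)) 2 μ), (∀ n, πs n ∈ Pi) → π ∈ Pi →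
      (∀ z : Lp (EuclideanSpace ℝ (Fin m)) 2 μ,
        Tendsto (fun n => ⟪πs n, z⟫) atTop (nhds ⟪π, z⟫)) →
      Tendsto (fun n => J (πs n)) atTop (nhds (J π)) ∧
        Tendsto (fun n => ‖F (πs n) - F π‖) atTop (nhds 0))
    -- Assumption 3 (convexity)
    (hJconc : ∀ π₁ ∈ Pi, ∀ π₂ ∈ Pi, ∀ t : ℝ, 0 ≤ t → t ≤ 1 →
      t * J π₁ + (1 - t) * J π₂ ≤ J (t • π₁ + (1 - t) • π₂))
    (hFconv : ∀ π₁ ∈ Pi, ∀ π₂ ∈ Pi, ∀ t : ℝ, 0 ≤ t → t ≤ 1 →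
      ∀ᵐ x ∂μ, F (t • π₁ + (1 - t) • π₂) x ≤ t * F π₁ x + (1 - t) * F π₂ x)
    -- dual function and nonempty dual optimal set
    (d : Lp ℝ 2 μ → ℝ)
    (hd : ∀ lam : Lp ℝ 2 μ, d lam = sInf ((fun π => -J π + ⟪lam, F π⟫) '' Pi))
    (hdualopt : ∃ lam : Lp ℝ 2 μ, (0 ≤ᵐ[μ] ⇑lam) ∧
      ∀ m' : Lp ℝ 2 μ, (0 ≤ᵐ[μ] ⇑m') → d m' ≤ d lam)
    -- ALaM iterates
    (lam : ℕ → Lp ℝ 2 μ) (πseq : ℕ → Lp (EuclideanSpace ℝ (Fin m)) 2 μ)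
    (ρ : ℕ → ℝ) (ρ₀ ρmax : ℝ)
    (hρ₀ : 0 < ρ₀) (hρ : ∀ k, ρ₀ ≤ ρ k ∧ ρ k ≤ ρmax)
    -- penalty parameters eventually constant equal to `ρ̄`
    (ρbar : ℝ) (K : ℕ) (hρconst : ∀ k ≥ K, ρ k = ρbar)
    (hlam0 : 0 ≤ᵐ[μ] ⇑(lam 0))
    (hπPi : ∀ k : ℕ, πseq (k + 1) ∈ Pi)
    (hπmin : ∀ k : ℕ, ∀ π ∈ Pi,
      -J (πseq (k + 1))
          + 1 / (2 * ρ k) * ‖Lp.posPart (lam k + ρ k • F (πseq (k + 1)))‖ ^ 2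
          - 1 / (2 * ρ k) * ‖lam k‖ ^ 2
        ≤ -J π + 1 / (2 * ρ k) * ‖Lp.posPart (lam k + ρ k • F π)‖ ^ 2
          - 1 / (2 * ρ k) * ‖lam k‖ ^ 2)
    (hlamupd : ∀ k : ℕ, lam (k + 1) = Lp.posPart (lam k + ρ k • F (πseq (k + 1)))) :
    -- every weak sequential cluster point of `{πᵏ}` is feasible and globally optimal
    ∀ (pibar : Lp (EuclideanSpace ℝ (Fin m)) 2 μ) (φ : ℕ → ℕ), StrictMono φ →
      (∀ z : Lp (EuclideanSpace ℝ (Fin m)) 2 μ,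
        Tendsto (fun j => ⟪πseq (φ j), z⟫) atTop (nhds ⟪pibar, z⟫)) →
      pibar ∈ Pi ∧ (∀ᵐ x ∂μ, F pibar x ≤ 0) ∧
        ∀ π ∈ Pi, (∀ᵐ x ∂μ, F π x ≤ 0) → J π ≤ J pibar := by
  subst hPi
  simp only [Lp_posPart_eq_posPart] at hπmin hlamupd
  simp only [hd, Lp.coeFn_nonneg] at hdualopt
  simp only [← tendsto_toWeakSpace_iff_real_inner] at hcont ⊢
  simp only [← Lp_nonpos_iff_ae]
  have hconv := convex_setOf_ae_mem_Lp (μ := μ) (p := 2) hAconv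
  obtain ⟨ls, hls⟩ := hdualopt
  have hiter : IsALaMIteration J F _ ρ lam πseq :=
    ⟨⟨ρ₀, hρ₀, fun k ↦ (hρ k).1⟩, hπPi, hπmin, hlamupd⟩
  exact fun pibar φ hφ ↦ stmt_1_general (isClosed_setOf_ae_mem_Lp hAcompact.isClosed)
    (concaveOn_of_le_one_sub hconv hJconc) (convexOn_of_ae_le hconv hFconv)
    (fun πs π hπs hπ hw ↦ (hcont πs π hπs hπ hw).1)
    (fun πs π hπs hπ hw ↦ tendsto_iff_norm_sub_tendsto_zero.2 (hcont πs π hπs hπ hw).2)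
    ((isDualOptimal_iff_sInf_le ⟨_, hπPi 0⟩ hMJ hMF).2 hls) hiter hφ.tendsto_atTop
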